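/- Let N ≥ 1 be odd, and let C be a 2×2 unitary matrix such that there exist a bijection φ of the set {X, Y, Z} and signs ε : {X,Y,Z} → {+1, −1} with C·P·C* = ε(P)·φ(P) for every P ∈ {X, Y, Z} (i.e. C is a single-qubit Clifford operation; for instance C = H, the Hadamard matrix, or C = I₂). Then for every 2^N×2^N complex matrix σ: Ξ_N( C^{⊗N} σ (C^{⊗N})* ) = C · Ξ_N(σ) · C*. (This is the transversality identity, equation (35) of Broadbent–Ji–Song–Watrous, specialized to the single-qubit Clifford gates H and I used in the map U_r; the concatenated Steane code has N = 7^t, which is odd.) -/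

import Mathlib

open Matrix BigOperators

noncomputable def pauliX : Matrix (Fin 2) (Fin 2) ℂ := !![0, 1; 1, 0]
noncomputable def pauliY : Matrix (Fin 2) (Fin 2) ℂ := !![0, -Complex.I; Complex.I, 0]
noncomputable def pauliZ : Matrix (Fin 2) (Fin 2) ℂ := !![1, 0; 0, -1]

/-- The `N`-fold Kronecker power of a 2×2 matrix, as a `2^N × 2^N` matrix whose rows and
columns are indexed by bit strings of length `N`. -/
noncomputable def kronPow (N : ℕ) (A : Matrix (Fin 2) (Fin 2) ℂ) :
    Matrix (Fin N → Fin 2) (Fin N → Fin 2) ℂ :=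
  Matrix.of fun x y => ∏ i, A (x i) (y i)

/-- The Hilbert–Schmidt inner product `⟨A, B⟩ = Tr(A* B)`. -/
noncomputable def hsInner {m : Type*} [Fintype m] (A B : Matrix m m ℂ) : ℂ := (Aᴴ * B).trace

/-- The map `Ξ_N(σ) = (⟨I₂^{⊗N},σ⟩ I₂ + ⟨X^{⊗N},σ⟩ X + ⟨Y^{⊗N},σ⟩ Y + ⟨Z^{⊗N},σ⟩ Z)/2`. -/
noncomputable def Xi (N : ℕ) (σ : Matrix (Fin N → Fin 2) (Fin N → Fin 2) ℂ) :
    Matrix (Fin 2) (Fin 2) ℂ :=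
  (1 / 2 : ℂ) • (hsInner (kronPow N 1) σ • 1 + hsInner (kronPow N pauliX) σ • pauliX
    + hsInner (kronPow N pauliY) σ • pauliY + hsInner (kronPow N pauliZ) σ • pauliZ)

/-- The three Pauli matrices `X`, `Y`, `Z`, indexed by `Fin 3`. -/
noncomputable def pauli : Fin 3 → Matrix (Fin 2) (Fin 2) ℂ := ![pauliX, pauliY, pauliZ]

/-!
Transposing conjugation by `C^{⊗N}` through the Hilbert–Schmidt pairing, the coefficient of `φ(P)`
in `Ξ_N(C^{⊗N} σ C^{⊗N}*)` is `⟨(C* φ(P) C)^{⊗N}, σ⟩`, where `C* φ(P) C = ε(P) P`. This equals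
`ε(P)^N ⟨P^{⊗N}, σ⟩`, while the coefficient of `φ(P)` in `C Ξ_N(σ) C*` is `ε(P) ⟨P^{⊗N}, σ⟩`.
For a sign `ε(P)` and odd `N` the two agree.
-/

section HilbertSchmidt

variable {m n : Type*} [Fintype m] [Fintype n]

theorem hsInner_smul_left (c : ℂ) (A B : Matrix m m ℂ) :
    hsInner (c • A) B = star c * hsInner A B := by
  simp only [hsInner, conjTranspose_smul, smul_mul, trace_smul, smul_eq_mul]

theorem hsInner_mul_mul_conjTranspose (A : Matrix m m ℂ) (U : Matrix m n ℂ) (S : Matrix n n ℂ) :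
    hsInner A (U * S * Uᴴ) = hsInner (Uᴴ * A * U) S := by
  calc (Aᴴ * (U * S * Uᴴ)).trace
      = ((Aᴴ * (U * S)) * Uᴴ).trace := by rw [← Matrix.mul_assoc]
    _ = (Uᴴ * (Aᴴ * (U * S))).trace := trace_mul_comm _ _
    _ = ((Uᴴ * A * U)ᴴ * S).trace := by
      simp only [conjTranspose_mul, conjTranspose_conjTranspose, Matrix.mul_assoc]

end HilbertSchmidt

section KroneckerPower

variable (N : ℕ) (A B : Matrix (Fin 2) (Fin 2) ℂ)

theorem kronPow_mul : kronPow N (A * B) = kronPow N A * kronPow N B := by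
  ext x y
  simp only [kronPow, of_apply, mul_apply, Finset.prod_univ_sum, Fintype.piFinset_univ,
    Finset.prod_mul_distrib]

theorem kronPow_conjTranspose : kronPow N Aᴴ = (kronPow N A)ᴴ := by
  ext x y
  simp only [kronPow, of_apply, conjTranspose_apply, star_prod]

theorem kronPow_smul (c : ℂ) : kronPow N (c • A) = c ^ N • kronPow N A := by
  ext x y
  simp only [kronPow, of_apply, Matrix.smul_apply, smul_eq_mul,
    Finset.prod_mul_distrib, Finset.prod_const, Finset.card_univ, Fintype.card_fin]

theorem hsInner_kronPow_conj (σ : Matrix (Fin N → Fin 2) (Fin N → Fin 2) ℂ) :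
    hsInner (kronPow N A) (kronPow N B * σ * (kronPow N B)ᴴ)
      = hsInner (kronPow N (Bᴴ * A * B)) σ := by
  rw [hsInner_mul_mul_conjTranspose, kronPow_mul, kronPow_mul, kronPow_conjTranspose]

theorem hsInner_kronPow_star_smul (c : ℂ) (σ : Matrix (Fin N → Fin 2) (Fin N → Fin 2) ℂ) :
    hsInner (kronPow N (star c • A)) σ = c ^ N * hsInner (kronPow N A) σ := by
  rw [kronPow_smul, hsInner_smul_left, star_pow, star_star]

end KroneckerPower

theorem star_mul_mul_eq_star_smul_of_mem_unitary {R M : Type*} [Monoid R] [StarMul R]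
    [Monoid M] [StarMul M] [MulAction R M] [IsScalarTower R M M] [SMulCommClass R M M]
    {c : R} {u a b : M} (hc : c ∈ unitary R) (hu : u ∈ unitary M)
    (h : u * a * star u = c • b) : star u * b * u = star c • a := by
  have hb : b = star c • (u * a * star u) := by
    rw [h, smul_smul, Unitary.star_mul_self_of_mem hc, one_smul]
  calc star u * b * u
      = star c • ((star u * u) * a * (star u * u)) := by
        rw [hb, mul_smul_comm, smul_mul_assoc]
        simp only [mul_assoc]
    _ = star c • a := by rw [Unitary.star_mul_self_of_mem hu, one_mul, mul_one]

section DecodeAlong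

variable {ι : Type*} [Fintype ι] (N : ℕ)

/-- The map `σ ↦ ∑ i, ⟨(P i)^{⊗N}, σ⟩ P i` attached to a finite family `P` of `2 × 2` matrices.
Up to the factor `1 / 2`, `Ξ_N` is the sum of these maps for the families `(I₂)` and
`(X, Y, Z)`. -/
noncomputable def decodeAlong (P : ι → Matrix (Fin 2) (Fin 2) ℂ)
    (σ : Matrix (Fin N → Fin 2) (Fin N → Fin 2) ℂ) : Matrix (Fin 2) (Fin 2) ℂ :=
  ∑ i, hsInner (kronPow N (P i)) σ • P i

theorem Xi_eq_decodeAlong (σ : Matrix (Fin N → Fin 2) (Fin N → Fin 2) ℂ) :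
    Xi N σ = (1 / 2 : ℂ) • (decodeAlong N (fun _ : Unit => 1) σ + decodeAlong N pauli σ) := by
  simp [Xi, decodeAlong, Fin.sum_univ_three, pauli, add_assoc]

theorem decodeAlong_kronPow_conj {C : Matrix (Fin 2) (Fin 2) ℂ}
    (hC : C ∈ unitaryGroup (Fin 2) ℂ) {P : ι → Matrix (Fin 2) (Fin 2) ℂ} (φ : Equiv.Perm ι)
    {c : ι → ℂ} (hc : ∀ i, c i ∈ unitary ℂ) (hcN : ∀ i, c i ^ N = c i)
    (hP : ∀ i, C * P i * Cᴴ = c i • P (φ i)) (σ : Matrix (Fin N → Fin 2) (Fin N → Fin 2) ℂ) :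
    decodeAlong N P (kronPow N C * σ * (kronPow N C)ᴴ) = C * decodeAlong N P σ * Cᴴ := by
  have hinv (i : ι) : Cᴴ * P (φ i) * C = star (c i) • P i :=
    star_mul_mul_eq_star_smul_of_mem_unitary (hc i) hC (hP i)
  calc ∑ i, hsInner (kronPow N (P i)) (kronPow N C * σ * (kronPow N C)ᴴ) • P i
      = ∑ i, hsInner (kronPow N (Cᴴ * P (φ i) * C)) σ • P (φ i) := by
        simp only [hsInner_kronPow_conj]
        exact (Equiv.sum_comp φ fun i => hsInner (kronPow N (Cᴴ * P i * C)) σ • P i).symm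
    _ = ∑ i, hsInner (kronPow N (P i)) σ • (C * P i * Cᴴ) := by
        refine Finset.sum_congr rfl fun i _ => ?_
        rw [hinv, hsInner_kronPow_star_smul, hcN, hP, smul_smul, mul_comm]
    _ = C * (∑ i, hsInner (kronPow N (P i)) σ • P i) * Cᴴ := by
        simp only [Finset.mul_sum, Finset.sum_mul, Matrix.mul_smul, Matrix.smul_mul]

end DecodeAlong

theorem stmt9_general (N : ℕ) {C : Matrix (Fin 2) (Fin 2) ℂ} (hC : C ∈ unitaryGroup (Fin 2) ℂ)
    (φ : Equiv.Perm (Fin 3)) {ε : Fin 3 → ℝ} (hε : ∀ i, ε i = 1 ∨ ε i = -1)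
    (hεN : ∀ i, ε i ^ N = ε i) (hCliff : ∀ i, C * pauli i * Cᴴ = (ε i : ℂ) • pauli (φ i))
    (σ : Matrix (Fin N → Fin 2) (Fin N → Fin 2) ℂ) :
    Xi N (kronPow N C * σ * (kronPow N C)ᴴ) = C * Xi N σ * Cᴴ := by
  have hε_unitary (i : Fin 3) : (ε i : ℂ) ∈ unitary ℂ := by
    rcases hε i with h | h <;> simp [h, Unitary.mem_iff]
  have hone : C * 1 * Cᴴ = (1 : ℂ) • 1 := by
    rw [Matrix.mul_one, one_smul]
    exact Unitary.mul_star_self_of_mem hC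
  have identity_part := decodeAlong_kronPow_conj N hC (P := fun _ : Unit => 1) (Equiv.refl Unit)
    (fun _ => one_mem (unitary ℂ)) (fun _ => one_pow N) (fun _ => hone) σ
  have pauli_part := decodeAlong_kronPow_conj N hC φ hε_unitary
    (fun i => mod_cast hεN i) hCliff σ
  rw [Xi_eq_decodeAlong, Xi_eq_decodeAlong, identity_part, pauli_part, Matrix.mul_smul,
    Matrix.smul_mul, Matrix.mul_add, Matrix.add_mul]

theorem stmt9 (N : ℕ) (hN : 1 ≤ N) (hodd : Odd N)
    (C : Matrix (Fin 2) (Fin 2) ℂ) (hC1 : C * Cᴴ = 1) (hC2 : Cᴴ * C = 1)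
    (φ : Equiv.Perm (Fin 3)) (ε : Fin 3 → ℝ) (hε : ∀ i, ε i = 1 ∨ ε i = -1)
    (hCliff : ∀ i, C * pauli i * Cᴴ = ((ε i : ℂ)) • pauli (φ i))
    (σ : Matrix (Fin N → Fin 2) (Fin N → Fin 2) ℂ) :
    Xi N (kronPow N C * σ * (kronPow N C)ᴴ) = C * Xi N σ * Cᴴ := by
  have sign_pow (i : Fin 3) : ε i ^ N = ε i := by rcases hε i with h | h <;> simp [h, hodd]
  exact stmt9_general N ⟨hC2, hC1⟩ φ hε sign_pow hCliff σ
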